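/- arXiv:2512.12942 — 2 statements merged into one kernel-verified Lean document; each statement's English description precedes it below -/
import Mathlib

section
/- Let K ⊊ L be a field extension and let A be a nonzero finite-dimensional K-subspace of L. Then A is matched to itself if and only if 1 ∉ A. -/
/-!
If `1 ∈ A`, take an ordered basis of `A` with `aᵢ = 1` for some `i`: then `aᵢ⁻¹A ∩ A = A` would lie
in the span of the `bⱼ`, `j ≠ i`, which misses `bᵢ ∈ A`.

Let now `1 ∉ A`, let `a` be an ordered basis of `A`, and put `Uᵢ = aᵢ⁻¹A ∩ A`. A basis `b` of `A`
with `Uᵢ ≤ span {bⱼ : j ≠ i}` for all `i` is the same as a basis of the dual of `A` whose `i`-th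
member annihilates `Uᵢ`. By Rado's theorem for subspaces (`exists_linearIndependent_mem`), applied
to the annihilators of the `Uᵢ`, such a basis exists as soon as `|J| + dim ⋂_{i ∈ J} Uᵢ ≤ dim A`
for every set `J` of indices (`exists_basis_of_finrank_le`).

For this dimension bound, let `V = ⋂_{i ∈ J} Uᵢ` and let `W` be the span of the `aᵢ`, `i ∈ J`, so
that `V`, `W` and `VW` are contained in `A`. Then `dim V + dim W ≤ dim A` (`finrank_add_le`). This
is a linear version of the Scherk-Kemperman theorem on sumsets, proved with Dyson's `e`-transform:
for `e = 1` or `0 ≠ e ∈ V`, replacing `(V, W)` by `(V + eW, W ∩ e⁻¹V)` keeps the hypotheses and the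
sum of the dimensions. If no such `e` makes `W` smaller, then `W ≤ V` and `VW ≤ V`, so
multiplication by a nonzero `w ∈ W` permutes `V` and some `v ∈ V` has `vw = w`, that is `v = 1`.
-/

open Pointwise

/-- `a : Fin n → L` is an ordered basis of the `K`-subspace `A` of `L`. -/
def IsBasisOf {K L : Type*} [Field K] [Field L] [Algebra K L]
    (A : Submodule K L) {n : ℕ} (a : Fin n → L) : Prop :=
  LinearIndependent K a ∧ Submodule.span K (Set.range a) = A

/-- `A` is matched to `B` (both of dimension `n`): every ordered basis of `A`
can be matched to some ordered basis of `B`. -/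
def MatchedTo {K L : Type*} [Field K] [Field L] [Algebra K L]
    (A B : Submodule K L) (n : ℕ) : Prop :=
  ∀ a : Fin n → L, IsBasisOf A a →
    ∃ b : Fin n → L, IsBasisOf B b ∧
      ∀ i : Fin n, ((a i)⁻¹ • (A : Set L)) ∩ (B : Set L) ⊆
        (Submodule.span K (b '' {j | j ≠ i}) : Set L)

/-- Multiplication by `w` is injective on the finite-dimensional space `V`, hence surjective, so
`w ∈ V` has a preimage, which can only be `1`. -/
theorem one_mem_of_mul_mem {K L : Type*} [Field K] [Field L] [Algebra K L]
    (V : Submodule K L) [FiniteDimensional K V] {w : L} (hw : w ≠ 0) (hwV : w ∈ V)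
    (hmul : ∀ v ∈ V, v * w ∈ V) : (1 : L) ∈ V := by
  let f : V →ₗ[K] V := (LinearMap.mulRight K w).restrict hmul
  have hf : Function.Injective f := by
    intro x y hxy
    have h : (x : L) * w = y * w := congrArg Subtype.val hxy
    exact Subtype.ext (mul_right_cancel₀ hw h)
  obtain ⟨v, hv⟩ := LinearMap.surjective_of_injective hf ⟨w, hwV⟩
  have h : (v : L) * w = w := congrArg Subtype.val hv
  have h1 : (v : L) = 1 := mul_right_cancel₀ hw (by rw [h, one_mul])
  exact h1 ▸ v.2

/-- If `V`, `W` and all products of their elements lie in `A`, and `1 ∉ A`, then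
`dim V + dim W ≤ dim A`. Induction on `k = dim W` through the `e`-transform. -/
theorem finrank_add_le {K L : Type*} [Field K] [Field L] [Algebra K L]
    (A : Submodule K L) [FiniteDimensional K A] (h1 : (1 : L) ∉ A) (k : ℕ) :
    ∀ V W : Submodule K L, V ≤ A → W ≤ A → (∀ v ∈ V, ∀ w ∈ W, v * w ∈ A) →
      Module.finrank K W = k →
      Module.finrank K V + Module.finrank K W ≤ Module.finrank K A := by
  induction k using Nat.strong_induction_on with
  | _ k ih =>
  intro V W hV hW hVW hk
  have : FiniteDimensional K V := Submodule.finiteDimensional_of_le hV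
  have : FiniteDimensional K W := Submodule.finiteDimensional_of_le hW
  by_cases hW0 : W = ⊥
  · subst hW0
    simpa using Submodule.finrank_mono hV
  obtain ⟨w, hwW, hw⟩ := Submodule.exists_mem_ne_zero_of_ne_bot hW0
  -- Some `e` makes `W ∩ e⁻¹V` smaller than `W`: otherwise `W ≤ V` and `VW ≤ V`, so `1 ∈ V`.
  obtain ⟨e, he0, he, x, hxW, hxV⟩ :
      ∃ e : L, e ≠ 0 ∧ (e = 1 ∨ e ∈ V) ∧ ∃ x ∈ W, e * x ∉ V := by
    by_contra! hcon
    refine h1 (hV (one_mem_of_mul_mem V hw ?_ ?_))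
    · simpa using hcon 1 one_ne_zero (Or.inl rfl) w hwW
    · intro v hv
      by_cases hv0 : v = 0
      · simp [hv0]
      · exact hcon v hv0 (Or.inr hv) w hwW
  let m : L →ₗ[K] L := LinearMap.mulLeft K e
  have hm : Function.Injective m := fun a b hab => mul_left_cancel₀ he0 hab
  let W₁ : Submodule K L := W ⊓ V.comap m
  have hW₁W : W₁ < W := lt_of_le_of_ne inf_le_left fun h => hxV (h.ge hxW).2
  have heW : W.map m ≤ A := by
    rintro _ ⟨y, hy, rfl⟩
    rcases he with rfl | he
    · simpa [m] using hW hy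
    · exact hVW e he y hy
  have hlt : Module.finrank K W₁ < k := hk ▸ Submodule.finrank_lt_finrank_of_lt hW₁W
  have key := ih _ hlt (V ⊔ W.map m) W₁ (sup_le hV heW) (hW₁W.le.trans hW) (by
    intro v hv y hy
    obtain ⟨v', hv', _, ⟨z, hz, rfl⟩, rfl⟩ := Submodule.mem_sup.1 hv
    rw [add_mul]
    refine A.add_mem (hVW v' hv' y hy.1) ?_
    have h := hVW _ hy.2 z hz
    have h2 : m z * y = m y * z := by simp only [m, LinearMap.mulLeft_apply]; ring
    rwa [h2]) rfl
  have hdim := Submodule.finrank_sup_add_finrank_inf_eq V (W.map m)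
  have e1 : Module.finrank K (W.map m) = Module.finrank K W :=
    (Submodule.equivMapOfInjective m hm W).finrank_eq.symm
  have e2 : Module.finrank K W₁ = Module.finrank K (V ⊓ W.map m : Submodule K L) := by
    have h : W₁.map m = V ⊓ W.map m := SetLike.coe_injective <| by
      simpa [W₁, Set.inter_comm] using Set.image_inter_preimage m (W : Set L) (V : Set L)
    rw [(Submodule.equivMapOfInjective m hm W₁).finrank_eq, h]
  omega

/-- Rado's theorem for subspaces: if `dim ∑_{i ∈ J} Fᵢ ≥ |J|` for every `J`, then there are linearly
independent `fᵢ ∈ Fᵢ`. Induction on `N = ∑ dim Fᵢ`. When some `Fᵢ` has dimension at least `2`, it is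
the sum of two proper subspaces, and submodularity of the dimension shows that the hypothesis
survives replacing `Fᵢ` by one of them. -/
theorem exists_linearIndependent_mem {K E ι : Type*} [Field K] [AddCommGroup E] [Module K E]
    [FiniteDimensional K E] [Fintype ι] (N : ℕ) :
    ∀ F : ι → Submodule K E,
      (∀ J : Finset ι, J.card ≤ Module.finrank K (J.sup F : Submodule K E)) →
      ∑ i, Module.finrank K (F i) = N →
      ∃ f : ι → E, (∀ i, f i ∈ F i) ∧ LinearIndependent K f := by
  classical
  induction N using Nat.strong_induction_on with
  | _ N ih =>
  intro F hF hN
  by_cases hone : ∀ i, Module.finrank K (F i) ≤ 1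
  · choose f hf using fun i => finrank_le_one_iff.1 (hone i)
    refine ⟨fun i => f i, fun i => (f i).2, ?_⟩
    rw [linearIndependent_iff_card_le_finrank_span]
    refine (hF Finset.univ).trans (Submodule.finrank_mono (Finset.sup_le fun i _ x hx => ?_))
    obtain ⟨c, hc⟩ := hf i ⟨x, hx⟩
    have : x = c • (f i : E) := congrArg Subtype.val hc.symm
    rw [this]
    exact Submodule.smul_mem _ _ (Submodule.subset_span ⟨i, rfl⟩)
  push Not at hone
  obtain ⟨i, hi⟩ := hone
  obtain ⟨H₁, H₂, h₁, h₂, hsup⟩ : ∃ H₁ H₂ : Submodule K E, H₁ < F i ∧ H₂ < F i ∧ H₁ ⊔ H₂ = F i := by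
    have hne : F i ≠ ⊥ := by
      intro h
      rw [h, finrank_bot] at hi
      omega
    obtain ⟨x, hx, hx0⟩ := Submodule.exists_mem_ne_zero_of_ne_bot hne
    obtain ⟨C, hC⟩ := Submodule.exists_isCompl (Submodule.span K {x})
    have hle : Submodule.span K {x} ≤ F i := by simpa using hx
    refine ⟨Submodule.span K {x}, C ⊓ F i, lt_of_le_of_ne hle ?_,
      lt_of_le_of_ne inf_le_right ?_, ?_⟩
    · intro h
      rw [← h, finrank_span_singleton hx0] at hi
      omega
    · intro h
      exact hx0 (Submodule.disjoint_def.1 hC.disjoint x (Submodule.mem_span_singleton_self x)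
        (h.ge hx).1)
    · rw [← sup_inf_assoc_of_le C hle, hC.sup_eq_top, top_inf_eq]
  have hstep : ∀ H < F i, (∀ J : Finset ι, J.card ≤
      Module.finrank K (J.sup (Function.update F i H) : Submodule K E)) →
      ∃ f : ι → E, (∀ i, f i ∈ F i) ∧ LinearIndependent K f := by
    intro H hH hJ
    have hle : ∀ j, Function.update F i H j ≤ F j := by
      intro j
      by_cases hj : j = i
      · subst hj; simpa using hH.le
      · simp [hj]
    obtain ⟨f, hf, hli⟩ := ih _ (hN ▸ Finset.sum_lt_sum
      (fun j _ => Submodule.finrank_mono (hle j))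
      ⟨i, Finset.mem_univ i, by
        rw [Function.update_self]; exact Submodule.finrank_lt_finrank_of_lt hH⟩) _ hJ rfl
    exact ⟨f, fun j => hle j (hf j), hli⟩
  -- If replacing `F i` by `H` is not allowed, the rank condition fails for a set containing `i`,
  -- namely `insert i J`.
  have hbad : ∀ H < F i, (¬ ∃ f : ι → E, (∀ i, f i ∈ F i) ∧ LinearIndependent K f) →
      ∃ J : Finset ι, i ∉ J ∧ Module.finrank K (H ⊔ J.sup F : Submodule K E) ≤ J.card := by
    intro H hH hno
    by_contra! hcon
    refine hno (hstep H hH fun J => ?_)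
    have heq : ∀ J : Finset ι, i ∉ J → J.sup (Function.update F i H) = J.sup F := fun J hiJ =>
      Finset.sup_congr rfl fun j hj => Function.update_of_ne (ne_of_mem_of_not_mem hj hiJ) _ _
    by_cases hiJ : i ∈ J
    · have h := hcon (J.erase i) (Finset.notMem_erase i J)
      rw [← Finset.insert_erase hiJ, Finset.sup_insert, Function.update_self,
        heq _ (Finset.notMem_erase i J), Finset.card_insert_of_notMem (Finset.notMem_erase i J)]
      exact h
    · rw [heq J hiJ]
      exact hF J
  by_contra hno
  obtain ⟨J₁, hi₁, hJ₁⟩ := hbad H₁ h₁ hno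
  obtain ⟨J₂, hi₂, hJ₂⟩ := hbad H₂ h₂ hno
  have hdim := Submodule.finrank_sup_add_finrank_inf_eq (H₁ ⊔ J₁.sup F) (H₂ ⊔ J₂.sup F)
  have hinf : (J₁ ∩ J₂).card ≤
      Module.finrank K ((H₁ ⊔ J₁.sup F) ⊓ (H₂ ⊔ J₂.sup F) : Submodule K E) :=
    (hF _).trans (Submodule.finrank_mono (le_inf
      ((Finset.sup_mono Finset.inter_subset_left).trans le_sup_right)
      ((Finset.sup_mono Finset.inter_subset_right).trans le_sup_right)))
  have hun : (J₁ ∪ J₂).card + 1 ≤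
      Module.finrank K ((H₁ ⊔ J₁.sup F) ⊔ (H₂ ⊔ J₂.sup F) : Submodule K E) := by
    have h := hF (insert i (J₁ ∪ J₂))
    rw [Finset.card_insert_of_notMem (by simp [hi₁, hi₂]), Finset.sup_insert,
      Finset.sup_union, ← hsup] at h
    rwa [sup_sup_sup_comm]
  have := Finset.card_union_add_card_inter J₁ J₂
  omega

/-- Dual form of Rado's theorem: if `|J| + dim ⋂_{i ∈ J} Uᵢ ≤ dim E` for every `J`, then some basis
`b` of `E` has `Uᵢ ≤ span {bⱼ : j ≠ i}` for all `i`. It is the basis dual to a system of linearly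
independent functionals annihilating the `Uᵢ`. -/
theorem exists_basis_of_finrank_le {K E : Type*} [Field K] [AddCommGroup E] [Module K E]
    [FiniteDimensional K E] (U : Fin (Module.finrank K E) → Submodule K E)
    (hU : ∀ J : Finset (Fin (Module.finrank K E)),
      J.card + Module.finrank K (J.inf U : Submodule K E) ≤ Module.finrank K E) :
    ∃ b : Module.Basis (Fin (Module.finrank K E)) K E,
      ∀ i, U i ≤ Submodule.span K (b '' {j | j ≠ i}) := by
  classical
  obtain ⟨φ, hφ, hli⟩ := exists_linearIndependent_mem _ (fun i => (U i).dualAnnihilator) (by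
    intro J
    set S := J.sup fun i => (U i).dualAnnihilator
    have hle : S.dualCoannihilator ≤ J.inf U := Finset.le_inf fun i hi => by
      have h : (U i).dualAnnihilator ≤ S :=
        Finset.le_sup (f := fun i => (U i).dualAnnihilator) hi
      simpa using Submodule.dualCoannihilator_anti h
    have h1 := Submodule.finrank_mono hle
    have h2 := Subspace.finrank_add_finrank_dualCoannihilator_eq S
    have h3 := hU J
    omega) rfl
  let Φ : Module.Basis (Fin (Module.finrank K E)) K (Module.Dual K E) :=
    basisOfLinearIndependentOfCardEqFinrank' φ hli (by simp [Subspace.dual_finrank_eq])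
  let b := Φ.dualBasis.map (Module.evalEquiv K E).symm
  refine ⟨b, fun i x hx => ?_⟩
  rw [Module.Basis.mem_span_image]
  intro j hj
  rintro rfl
  rw [Finset.mem_coe, Finsupp.mem_support_iff] at hj
  apply hj
  have h0 : φ j x = 0 := (Submodule.mem_dualAnnihilator _).1 (hφ j) x hx
  have hδ : ∀ k, φ j (b k) = if k = j then 1 else 0 := by
    intro k
    -- `b` corresponds to the dual basis of `Φ` under `E ≃ E**`.
    have h1 : φ j (b k) = Module.evalEquiv K E (b k) (φ j) := rfl
    have h2 : φ j = Φ j := by simp [Φ]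
    rw [h1, h2]
    simp [b, Finsupp.single_apply, eq_comm]
  have hx' := congrArg (φ j) (b.sum_repr x)
  rw [map_sum, h0] at hx'
  simpa [hδ] using hx'

theorem stmt_17 {K L : Type*} [Field K] [Field L] [Algebra K L]
    (hKL : ¬ Function.Surjective (algebraMap K L))
    (A : Submodule K L) (hA : A ≠ ⊥) (hfin : Module.Finite K A) :
    MatchedTo A A (Module.finrank K A) ↔ (1 : L) ∉ A := by
  classical
  constructor
  · intro hM h1
    let v : A := ⟨1, h1⟩
    have hv : v ≠ 0 := fun h => one_ne_zero (congrArg Subtype.val h)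
    obtain ⟨a, i, ha⟩ : ∃ (a : Module.Basis (Fin (Module.finrank K A)) K A)
        (i : Fin (Module.finrank K A)), a i = v := by
      have hli : LinearIndepOn K id ({v} : Set A) := LinearIndepOn.singleton hv
      let B := Module.Basis.extend hli
      have : Fintype (hli.extend (Set.subset_univ _)) := FiniteDimensional.fintypeBasisIndex B
      let e := Fintype.equivFinOfCardEq (Module.finrank_eq_card_basis B).symm
      have hmem : v ∈ hli.extend (Set.subset_univ _) := hli.subset_extend _ rfl
      exact ⟨B.reindex e, e ⟨v, hmem⟩, by simp [B]⟩
    -- The condition at `i`, where `aᵢ = 1`, puts `bᵢ` in the span of the other `bⱼ`.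
    obtain ⟨b, ⟨hbli, hb⟩, hab⟩ := hM (fun j => a j)
      ⟨a.linearIndependent.map' A.subtype A.ker_subtype, by
        have := congrArg (Submodule.map A.subtype) a.span_eq
        rw [Submodule.map_span, ← Set.range_comp, Submodule.map_top, A.range_subtype] at this
        exact this⟩
    have hbi : b i ∈ A := hb ▸ Submodule.subset_span ⟨i, rfl⟩
    refine hbli.notMem_span_image (s := {j | j ≠ i}) (x := i) (by simp) (hab i ⟨?_, hbi⟩)
    simpa [ha, v] using hbi
  · intro h1 a ⟨hali, ha⟩
    have haA : ∀ i, a i ∈ A := fun i => ha.le (Submodule.subset_span ⟨i, rfl⟩)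
    -- `U i` is `aᵢ⁻¹A ∩ A`, seen inside `A`.
    let U : Fin (Module.finrank K A) → Submodule K A := fun i =>
      A.comap (LinearMap.mulLeft K (a i) ∘ₗ A.subtype)
    obtain ⟨b, hb⟩ := exists_basis_of_finrank_le U (by
      intro J
      have hW : Module.finrank K (Submodule.span K (a '' (J : Set _))) = J.card := by
        have h := finrank_span_eq_card (hali.comp (fun j : J => (j : Fin _)) Subtype.val_injective)
        have hr : Set.range (fun j : J => (j : Fin (Module.finrank K A))) = (J : Set _) := by
          ext; simp
        rw [Set.range_comp, hr] at h
        simpa using h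
      have h := finrank_add_le A h1 _ ((J.inf U).map A.subtype) (Submodule.span K (a '' (J : Set _)))
        (Submodule.map_subtype_le _ _)
        (Submodule.span_le.2 (by rintro _ ⟨i, -, rfl⟩; exact haA i)) (by
          rintro _ ⟨x, hx, rfl⟩ w hw
          have hle : Submodule.span K (a '' (J : Set _)) ≤
              A.comap (LinearMap.mulLeft K (x : L)) := by
            rw [Submodule.span_le]
            rintro _ ⟨i, hi, rfl⟩
            have hxi : a i * x ∈ A := (Finset.inf_le hi : J.inf U ≤ U i) hx
            simpa [mul_comm] using hxi
          exact hle hw) rfl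
      rw [hW, ← (Submodule.equivMapOfInjective A.subtype A.subtype_injective _).finrank_eq] at h
      omega)
    refine ⟨fun j => b j, ⟨b.linearIndependent.map' A.subtype A.ker_subtype, ?_⟩, ?_⟩
    · have := congrArg (Submodule.map A.subtype) b.span_eq
      rw [Submodule.map_span, ← Set.range_comp, Submodule.map_top, A.range_subtype] at this
      exact this
    · rintro i x ⟨hx, hxA⟩
      have hxU : (⟨x, hxA⟩ : A) ∈ U i := by
        obtain ⟨y, hy, rfl⟩ := hx
        have h0 := hali.ne_zero i
        simpa [U, h0] using hy
      have := Submodule.mem_map_of_mem (f := A.subtype) (hb i hxU)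
      rw [Submodule.map_span, ← Set.image_comp] at this
      exact this
end

section
/- Let K ⊊ L be a field extension with at least one proper nontrivial intermediate field of finite K-dimension, and let n be a positive integer with n₀(K,L) ≤ n < [L:K]. Then there exist n-dimensional K-subspaces A, B ⊆ L with 1 ∉ B such that (A,B) is unmatchable if and only if there exists an intermediate field K ⊊ F ⊆ L with [F:K] ≤ n and [F:K] not dividing n+1. -/
/-!
The implication from left to right rests on two classical facts.

* Rado's theorem for subspaces (`exists_linearIndependent_transversal`), applied in the dual of `B`,
  shows that a basis `a` of `A` can be matched as soon as
  `dim ⋂ i ∈ I, (aᵢ⁻¹A ∩ B) ≤ n - |I|` for every `I` (`exists_matched_basis`).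
* A linear version of Olson's theorem (`exists_stable_subspace`): a product `PQ` of two subspaces
  with `1 ∈ Q` contains a nonzero subspace `S` stable under an intermediate field `H`, with
  `dim P + dim Q ≤ dim S + dim H`.

If `(A, B)` is unmatchable, Rado's condition fails for some `I`. Put `W = span {aᵢ : i ∈ I}` and
`U = ⋂ i ∈ I, (aᵢ⁻¹A ∩ B)`; then `W(U + K) ⊆ A`, and `dim W + dim (U + K) ≥ n + 2` because `1 ∉ B`.
Olson's theorem gives `H` and `S ⊆ A` with `n + 2 - [H:K] ≤ dim S ≤ n`. As `[H:K]` divides `dim S`,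
it is at least `2`, at most `n`, and cannot divide `n + 1`.

Conversely, let `h = [F:K] ≤ n` with `h ∤ n + 1`, so that `n = qh + r` with `r < h - 1`. Let `M` be an
`F`-subspace of `F`-dimension `q`, let `A ⊇ M` have dimension `n`, let `U` be a hyperplane of `F` with
`1 ∉ U`, and let `B ⊇ U` have dimension `n` with `1 ∉ B`. A basis of `A` extending a basis of `M`
cannot be matched: `U ⊆ aᵢ⁻¹A ∩ B` for each of the `qh` vectors in `M`, so a matching would put `U`,
of dimension `h - 1`, in the span of the `r` remaining vectors of the basis of `B`.
-/

open Pointwise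

open Module

/-! ### Independent transversals of subspaces -/

/-- Rado's theorem for subspaces. A subspace `E i` of dimension at least two is a sum of two proper
subspaces, and by submodularity of dimension one of them can replace `E i` without destroying
Hall's condition; this reduces to the case of lines. -/
theorem exists_linearIndependent_transversal {K V ι : Type*} [Field K] [AddCommGroup V] [Module K V]
    [FiniteDimensional K V] [Fintype ι] [DecidableEq ι] (m : ℕ) :
    ∀ E : ι → Submodule K V, ∑ i, finrank K (E i) = m →
      (∀ I : Finset ι, I.card ≤ finrank K (I.sup E : Submodule K V)) →
      ∃ e : ι → V, (∀ i, e i ∈ E i) ∧ LinearIndependent K e := by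
  induction m using Nat.strong_induction_on with
  | _ m ih =>
  intro E hm hE
  by_cases h1 : ∀ i, finrank K (E i) ≤ 1
  · have h2 : ∀ i, ∃ v : E i, ∀ w : E i, ∃ c : K, c • v = w := fun i =>
      finrank_le_one_iff.1 (h1 i)
    choose v hv using h2
    refine ⟨fun i => (v i : V), fun i => (v i).2, ?_⟩
    rw [linearIndependent_iff_card_le_finrank_span]
    refine (hE Finset.univ).trans (Submodule.finrank_mono ?_)
    refine Finset.sup_le fun i _ w hw => ?_
    obtain ⟨c, hc⟩ := hv i ⟨w, hw⟩
    have : w = c • (v i : V) := by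
      have := congrArg Subtype.val hc
      simpa using this.symm
    rw [this]
    exact Submodule.smul_mem _ _ (Submodule.subset_span ⟨i, rfl⟩)
  · push Not at h1
    obtain ⟨i, hi⟩ := h1
    obtain ⟨X, Y, hX, hY, hXY⟩ : ∃ X Y : Submodule K V, X < E i ∧ Y < E i ∧ X ⊔ Y = E i := by
      have hne : E i ≠ ⊥ := by
        intro h
        rw [h, finrank_bot] at hi
        omega
      obtain ⟨y, hy, hy0⟩ := Submodule.exists_mem_ne_zero_of_ne_bot hne
      have hyE : K ∙ y ≤ E i := by
        rw [Submodule.span_singleton_le_iff_mem]; exact hy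
      obtain ⟨C, hC⟩ := Submodule.exists_isCompl (K ∙ y)
      refine ⟨C ⊓ E i, K ∙ y, lt_of_le_of_ne inf_le_right ?_, lt_of_le_of_ne hyE ?_, ?_⟩
      · intro h
        have hyC : y ∈ C := (h.symm ▸ hy : y ∈ C ⊓ E i).1
        have := hC.disjoint.le_bot ⟨Submodule.mem_span_singleton_self y, hyC⟩
        exact hy0 (by simpa using this)
      · intro h
        rw [← h, finrank_span_singleton hy0] at hi
        omega
      · rw [sup_comm, ← sup_inf_assoc_of_le _ hyE, hC.sup_eq_top, top_inf_eq]
    have key : ∀ Z : Submodule K V, Z < E i →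
        (∃ e : ι → V, (∀ i, e i ∈ E i) ∧ LinearIndependent K e) ∨
        ∃ I : Finset ι, i ∉ I ∧ finrank K (Z ⊔ I.sup E : Submodule K V) ≤ I.card := by
      intro Z hZ
      by_cases hall : ∀ I : Finset ι,
          I.card ≤ finrank K (I.sup (Function.update E i Z) : Submodule K V)
      · left
        have hlt : ∑ j, finrank K (Function.update E i Z j) < m := by
          rw [← hm]
          refine Finset.sum_lt_sum (fun j _ => ?_) ⟨i, Finset.mem_univ i, ?_⟩
          · by_cases hj : j = i
            · subst hj
              rw [Function.update_self]
              exact Submodule.finrank_mono hZ.le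
            · rw [Function.update_of_ne hj]
          · rw [Function.update_self]
            exact Submodule.finrank_lt_finrank_of_lt hZ
        obtain ⟨e, he, hli⟩ := ih _ hlt _ rfl hall
        refine ⟨e, fun j => ?_, hli⟩
        by_cases hj : j = i
        · subst hj
          have := he j
          rw [Function.update_self] at this
          exact hZ.le this
        · have := he j
          rwa [Function.update_of_ne hj] at this
      · right
        push Not at hall
        obtain ⟨I, hI⟩ := hall
        have hcongr : ∀ J : Finset ι, i ∉ J → J.sup (Function.update E i Z) = J.sup E := by
          intro J hJ
          refine Finset.sup_congr rfl fun j hj => ?_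
          rw [Function.update_of_ne]
          rintro rfl
          exact hJ hj
        by_cases hiI : i ∈ I
        · refine ⟨I.erase i, Finset.notMem_erase i I, ?_⟩
          rw [← Finset.insert_erase hiI, Finset.sup_insert, Function.update_self,
            hcongr _ (Finset.notMem_erase i I),
            Finset.card_insert_of_notMem (Finset.notMem_erase i I)] at hI
          omega
        · rw [hcongr I hiI] at hI
          exact absurd (hE I) (by omega)
    rcases key X hX with h | ⟨I, hiI, hI⟩
    · exact h
    rcases key Y hY with h | ⟨J, hiJ, hJ⟩
    · exact h
    exfalso
    have hsum := Submodule.finrank_sup_add_finrank_inf_eq (X ⊔ I.sup E) (Y ⊔ J.sup E)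
    have hU : finrank K ((insert i (I ∪ J)).sup E : Submodule K V) ≤
        finrank K ((X ⊔ I.sup E) ⊔ (Y ⊔ J.sup E) : Submodule K V) := by
      apply Submodule.finrank_mono
      rw [Finset.sup_insert, Finset.sup_union, ← hXY]
      exact (sup_sup_sup_comm X Y (I.sup E) (J.sup E)).le
    have hN : finrank K ((I ∩ J).sup E : Submodule K V) ≤
        finrank K ((X ⊔ I.sup E) ⊓ (Y ⊔ J.sup E) : Submodule K V) := by
      apply Submodule.finrank_mono
      exact le_inf ((Finset.sup_mono Finset.inter_subset_left).trans le_sup_right)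
        ((Finset.sup_mono Finset.inter_subset_right).trans le_sup_right)
    have h1 := hE (insert i (I ∪ J))
    have h2 := hE (I ∩ J)
    rw [Finset.card_insert_of_notMem (by simp [hiI, hiJ])] at h1
    have h3 := Finset.card_union_add_card_inter I J
    omega

/-- Dual form of Rado's theorem: under the dimension condition there is a basis `b` of `V` with
`T i ⊆ span {b j : j ≠ i}` for all `i`. The independent functionals vanishing on the `T i` form a
basis of the dual space, and `b` is the basis dual to it. -/
theorem exists_matched_basis {K V : Type*} [Field K] [AddCommGroup V] [Module K V]
    [FiniteDimensional K V] {n : ℕ} (hV : finrank K V = n) (T : Fin n → Submodule K V)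
    (hT : ∀ I : Finset (Fin n), finrank K (I.inf T : Submodule K V) + I.card ≤ n) :
    ∃ b : Basis (Fin n) K V, ∀ i, T i ≤ Submodule.span K (b '' {j | j ≠ i}) := by
  have hsup : ∀ I : Finset (Fin n),
      I.sup (fun i => (T i).dualAnnihilator) = (I.inf T).dualAnnihilator := by
    intro I
    induction I using Finset.induction_on with
    | empty => simp
    | insert i I _ ih =>
      rw [Finset.sup_insert, Finset.inf_insert, ih, Subspace.dualAnnihilator_inf_eq]
  obtain ⟨f, hf, hli⟩ := exists_linearIndependent_transversal _
    (fun i => (T i).dualAnnihilator) rfl (by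
      intro I
      rw [hsup]
      have h1 := Subspace.finrank_add_finrank_dualAnnihilator_eq (I.inf T)
      have h2 := hT I
      omega)
  have hspan : Submodule.span K (Set.range f) = ⊤ :=
    hli.span_eq_top_of_card_eq_finrank' (by rw [Subspace.dual_finrank_eq, hV, Fintype.card_fin])
  have hinj : Function.Injective (LinearMap.pi f) := by
    rw [← LinearMap.ker_eq_bot, LinearMap.ker_eq_bot']
    intro x hx
    rw [← Module.forall_dual_apply_eq_zero_iff K]
    intro g
    have hg : g ∈ Submodule.span K (Set.range f) := hspan ▸ Submodule.mem_top
    induction hg using Submodule.span_induction with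
    | mem g hg =>
      obtain ⟨i, rfl⟩ := hg
      exact congrFun hx i
    | zero => rfl
    | add g g' _ _ h h' => simp [h, h']
    | smul c g _ h => simp [h]
  let φ : V ≃ₗ[K] (Fin n → K) :=
    LinearEquiv.ofInjectiveOfFinrankEq (LinearMap.pi f) hinj (by simp [hV])
  have hφ : ∀ x i, φ x i = f i x := fun x i => rfl
  refine ⟨Basis.ofEquivFun φ, fun i x hx => ?_⟩
  rw [← (Basis.ofEquivFun φ).sum_repr x]
  refine Submodule.sum_mem _ fun j _ => ?_
  by_cases hj : j = i
  · subst hj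
    have : (Basis.ofEquivFun φ).repr x j = 0 := by
      have h0 : f j x = 0 := (Submodule.mem_dualAnnihilator _).1 (hf j) x hx
      simpa [← hφ] using h0
    rw [this, zero_smul]
    exact Submodule.zero_mem _
  · exact Submodule.smul_mem _ _ (Submodule.subset_span ⟨j, hj, rfl⟩)

/-! ### Stable subspaces of products -/

/-- Linear version of Olson's theorem. For `e ∈ P`, passing from `(P, Q)` to
`(P + eQ, Q ∩ e⁻¹P)` preserves the sum of the dimensions and does not enlarge the product. When no
such step shrinks `Q`, one has `PQ ⊆ P`, and `H` is the field of all `x` with `xP ⊆ P`. -/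
theorem exists_stable_subspace {K L : Type*} [Field K] [Field L] [Algebra K L] (m : ℕ) :
    ∀ P Q : Submodule K L, FiniteDimensional K P → FiniteDimensional K Q → P ≠ ⊥ → (1 : L) ∈ Q →
      finrank K Q = m →
      ∃ (H : IntermediateField K L) (S : Submodule K L), FiniteDimensional K H ∧ S ≤ P * Q ∧
        S ≠ ⊥ ∧ (∀ x ∈ H, ∀ s ∈ S, x * s ∈ S) ∧
        finrank K P + finrank K Q ≤ finrank K S + finrank K H := by
  induction m using Nat.strong_induction_on with
  | _ m ih =>
  intro P Q hP hQ hP0 h1 hm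
  by_cases hst : ∀ e ∈ P, ∀ b ∈ Q, e * b ∈ P
  · let T : Subalgebra K L :=
      { carrier := {x | ∀ a ∈ P, x * a ∈ P}
        mul_mem' := fun {x y} hx hy a ha => by
          rw [mul_assoc]; exact hx _ (hy _ ha)
        add_mem' := fun {x y} hx hy a ha => by
          rw [add_mul]; exact P.add_mem (hx _ ha) (hy _ ha)
        algebraMap_mem' := fun c a ha => by
          rw [← Algebra.smul_def]; exact P.smul_mem c ha }
    obtain ⟨a, ha, ha0⟩ := Submodule.exists_mem_ne_zero_of_ne_bot hP0
    let g : T →ₗ[K] P :=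
      LinearMap.codRestrict P ((LinearMap.mulRight K a).comp T.val.toLinearMap)
        (fun x => x.2 a ha)
    have hg : Function.Injective g := by
      intro x y hxy
      have : (x : L) * a = y * a := congrArg Subtype.val hxy
      exact Subtype.ext (mul_right_cancel₀ ha0 this)
    have hTfin : FiniteDimensional K T := FiniteDimensional.of_injective g hg
    let H : IntermediateField K L := T.toIntermediateField (fun x hx => by
      have halg : IsAlgebraic K (⟨x, hx⟩ : T) := Algebra.IsAlgebraic.isAlgebraic _
      exact T.inv_mem_of_algebraic (x := ⟨x, hx⟩) (by simpa using halg.algebraMap (A := L)))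
    have hHfin : FiniteDimensional K H := hTfin
    refine ⟨H, P, hHfin, ?_, hP0, fun x hx s hs => hx s hs, ?_⟩
    · intro p hp
      simpa using Submodule.mul_mem_mul hp h1
    · have hQH : Q ≤ Subalgebra.toSubmodule H.toSubalgebra := fun b hb a ha => by
        rw [mul_comm]; exact hst a ha b hb
      have : FiniteDimensional K (Subalgebra.toSubmodule H.toSubalgebra) := hHfin
      have h2 : finrank K Q ≤ finrank K H := Submodule.finrank_mono hQH
      omega
  · push Not at hst
    obtain ⟨e, he, b, hb, heb⟩ := hst
    have he0 : e ≠ 0 := by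
      rintro rfl
      exact heb (by simp)
    let μ := LinearMap.mulLeft K e
    have hμ : Function.Injective μ := mul_right_injective₀ he0
    have hlt : Q ⊓ P.comap μ < Q :=
      lt_of_le_of_ne inf_le_left fun h => heb (h.symm ▸ hb : b ∈ Q ⊓ P.comap μ).2
    have hQ' : FiniteDimensional K (Q ⊓ P.comap μ : Submodule K L) :=
      Submodule.finiteDimensional_of_le hlt.le
    obtain ⟨H, S, hH, hS, hS0, hstab, hdim⟩ := ih _
      (hm ▸ Submodule.finrank_lt_finrank_of_lt hlt)
      (P ⊔ Q.map μ) (Q ⊓ P.comap μ) inferInstance hQ'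
      (fun h => hP0 (le_bot_iff.1 (h ▸ le_sup_left)))
      ⟨h1, by simpa [μ] using he⟩ rfl
    refine ⟨H, S, hH, hS.trans ?_, hS0, hstab, ?_⟩
    · rw [Submodule.mul_le]
      intro x hx y hy
      obtain ⟨p, hp, z, ⟨q, hq, rfl⟩, rfl⟩ := Submodule.mem_sup.1 hx
      rw [add_mul]
      refine Submodule.add_mem _ (Submodule.mul_mem_mul hp hy.1) ?_
      have : μ q * y = (e * y) * q := by simp [μ]; ring
      rw [this]
      exact Submodule.mul_mem_mul hy.2 hq
    · have h2 := Submodule.finrank_sup_add_finrank_inf_eq P (Q.map μ)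
      have h3 : finrank K (Q.map μ) = finrank K Q :=
        (Submodule.equivMapOfInjective μ hμ Q).finrank_eq.symm
      have h4 : (Q ⊓ P.comap μ).map μ = P ⊓ Q.map μ := by
        apply SetLike.coe_injective
        rw [Submodule.map_coe, Submodule.coe_inf, Submodule.coe_inf, Submodule.comap_coe,
          Submodule.map_coe, Set.image_inter_preimage, Set.inter_comm]
      have h5 : finrank K ((Q ⊓ P.comap μ).map μ) = finrank K (Q ⊓ P.comap μ : Submodule K L) :=
        (Submodule.equivMapOfInjective μ hμ _).finrank_eq.symm
      rw [h4] at h5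
      omega

/-- The dimension of a subspace stable under an intermediate field is a multiple of its degree. -/
theorem finrank_dvd_of_stable {K L : Type*} [Field K] [Field L] [Algebra K L]
    (H : IntermediateField K L) (S : Submodule K L) (h : ∀ x ∈ H, ∀ s ∈ S, x * s ∈ S) :
    finrank K H ∣ finrank K S := by
  let S' : Submodule H L :=
    { carrier := S
      add_mem' := S.add_mem
      zero_mem' := S.zero_mem
      smul_mem' := fun c s hs => h c c.2 s hs }
  exact ⟨finrank H S', (finrank_mul_finrank K H S').symm⟩

/-! ### Subspaces and bases of prescribed dimension -/

/-- A subspace avoiding `x` can be enlarged to any dimension smaller than that of the whole space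
while still avoiding `x`. -/
theorem exists_le_notMem_finrank {K V : Type*} [Field K] [AddCommGroup V] [Module K V]
    {n : ℕ} (hn : (n : Cardinal) < Module.rank K V) (x : V) (d : ℕ) :
    ∀ P : Submodule K V, FiniteDimensional K P → x ∉ P → finrank K P + d = n →
      ∃ B : Submodule K V, P ≤ B ∧ FiniteDimensional K B ∧ x ∉ B ∧ finrank K B = n := by
  induction d with
  | zero => exact fun P hP hx h => ⟨P, le_rfl, hP, hx, h⟩
  | succ d ih =>
    intro P hP hx h
    have hx0 : x ≠ 0 := fun h0 => hx (h0 ▸ P.zero_mem)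
    have hne : ∃ y, y ∉ P ⊔ K ∙ x := by
      by_contra hcon
      push Not at hcon
      have htop : P ⊔ K ∙ x = ⊤ := eq_top_iff.2 fun y _ => hcon y
      have h1 : Module.rank K V = (finrank K (P ⊔ K ∙ x : Submodule K V) : Cardinal) := by
        rw [finrank_eq_rank, htop, rank_top]
      have h2 := Submodule.finrank_add_le_finrank_add_finrank P (K ∙ x)
      rw [finrank_span_singleton hx0] at h2
      rw [h1, Nat.cast_lt] at hn
      omega
    obtain ⟨y, hy⟩ := hne
    have hyP : y ∉ P := fun h => hy (Submodule.mem_sup_left h)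
    have hy0 : y ≠ 0 := fun h0 => hyP (h0 ▸ P.zero_mem)
    have hxy : x ∉ P ⊔ K ∙ y := by
      intro hmem
      obtain ⟨p, hp, z, hz, hpz⟩ := Submodule.mem_sup.1 hmem
      obtain ⟨c, rfl⟩ := Submodule.mem_span_singleton.1 hz
      have hc : c ≠ 0 := by
        rintro rfl
        apply hx
        rw [← hpz]
        simpa using hp
      apply hy
      have : y = c⁻¹ • (x - p) := by
        rw [← hpz, add_sub_cancel_left, inv_smul_smul₀ hc]
      rw [this]
      exact Submodule.smul_mem _ _ (Submodule.sub_mem _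
        (Submodule.mem_sup_right (Submodule.mem_span_singleton_self x))
        (Submodule.mem_sup_left hp))
    have hfin : finrank K (P ⊔ K ∙ y : Submodule K V) = finrank K P + 1 := by
      have h2 := Submodule.finrank_sup_add_finrank_inf_eq P (K ∙ y)
      have h3 : P ⊓ K ∙ y = ⊥ :=
        (Submodule.disjoint_span_singleton' hy0).2 hyP |>.eq_bot
      rw [h3, finrank_bot, finrank_span_singleton hy0] at h2
      omega
    obtain ⟨B, hB, h⟩ := ih (P ⊔ K ∙ y) inferInstance hxy (by omega)
    exact ⟨B, le_sup_left.trans hB, h⟩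

/-- Some basis of `V` has its first `m = dim N` vectors in `N`, and so extends a basis of `N`. -/
theorem exists_basis_extending {K V : Type*} [Field K] [AddCommGroup V] [Module K V]
    [FiniteDimensional K V] (N : Submodule K V) {m r n : ℕ} (hN : finrank K N = m)
    (hV : finrank K V = m + r) (hmr : m + r = n) :
    ∃ b : Basis (Fin n) K V, ∀ i : Fin n, (i : ℕ) < m → b i ∈ N := by
  obtain ⟨C, hC⟩ := Submodule.exists_isCompl N
  have hCd : finrank K C = r := by
    have := Submodule.finrank_add_eq_of_isCompl hC
    omega
  let bN := finBasisOfFinrankEq K N hN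
  let bC := finBasisOfFinrankEq K C hCd
  refine ⟨((bN.prod bC).map (Submodule.prodEquivOfIsCompl N C hC)).reindex
    (finSumFinEquiv.trans (finCongr hmr)), fun i hi => ?_⟩
  have hi' : i = (finSumFinEquiv.trans (finCongr hmr)) (Sum.inl ⟨i, hi⟩) := by
    ext; simp
  rw [hi', Basis.reindex_apply, Equiv.symm_apply_apply]
  simp

/-! ### From an unmatchable pair to a field -/

/-- An unmatchable pair `(A, B)` with `1 ∉ B` produces an intermediate field whose degree is at
most `n` and does not divide `n + 1`. -/
theorem exists_field_of_not_matchedTo {K L : Type*} [Field K] [Field L] [Algebra K L] {n : ℕ}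
    (hn : 0 < n) (A B : Submodule K L) (hA : finrank K A = n) (hB : finrank K B = n)
    (h1 : (1 : L) ∉ B) (hAB : ¬ MatchedTo A B n) :
    ∃ F : IntermediateField K L, F ≠ ⊥ ∧ FiniteDimensional K F ∧
      finrank K F ≤ n ∧ ¬ (finrank K F ∣ (n + 1)) := by
  have hAf : FiniteDimensional K A := FiniteDimensional.of_finrank_pos (by omega)
  have hBf : FiniteDimensional K B := FiniteDimensional.of_finrank_pos (by omega)
  unfold MatchedTo at hAB
  push Not at hAB
  obtain ⟨a, ⟨hali, haspan⟩, hab⟩ := hAB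
  have haA : ∀ i, a i ∈ A := fun i => haspan ▸ Submodule.subset_span ⟨i, rfl⟩
  -- `T i` is `aᵢ⁻¹A ∩ B`, as a subspace of `B`
  let T : Fin n → Submodule K B := fun i => (A.comap (LinearMap.mulLeft K (a i))).comap B.subtype
  obtain ⟨I, hI⟩ : ∃ I : Finset (Fin n), n < finrank K (I.inf T : Submodule K B) + I.card := by
    by_contra hcon
    push Not at hcon
    obtain ⟨b, hb⟩ := exists_matched_basis hB T hcon
    obtain ⟨i, hi⟩ := hab (fun j => (b j : L))
      ⟨b.linearIndependent.map' B.subtype B.ker_subtype, by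
        have : Set.range (fun j => (b j : L)) = B.subtype '' Set.range b := by
          rw [← Set.range_comp]; rfl
        rw [this, Submodule.span_image, b.span_eq, Submodule.map_subtype_top]⟩
    apply hi
    rintro x ⟨hxA, hxB⟩
    have hxT : (⟨x, hxB⟩ : B) ∈ T i := by
      obtain ⟨y, hy, hyx⟩ := hxA
      have : x = (a i)⁻¹ * y := hyx.symm
      show a i * x ∈ A
      rw [this, mul_inv_cancel_left₀ (hali.ne_zero i)]
      exact hy
    have h2 := Submodule.mem_map_of_mem (f := B.subtype) (hb i hxT)
    rw [Submodule.map_span, ← Set.image_comp] at h2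
    exact h2
  let U : Submodule K L := (I.inf T).map B.subtype
  have hUB : U ≤ B := Submodule.map_subtype_le B _
  have hUdim : finrank K U = finrank K (I.inf T : Submodule K B) :=
    (Submodule.equivMapOfInjective _ B.injective_subtype _).finrank_eq.symm
  let W : Submodule K L := Submodule.span K (a '' I)
  have hWdim : finrank K W = I.card := by
    have := finrank_span_eq_card (hali.comp (Subtype.val : I → Fin n) Subtype.val_injective)
    rw [Set.range_comp, Subtype.range_coe_subtype] at this
    simpa [W] using this
  have hUf : FiniteDimensional K U := Submodule.finiteDimensional_of_le hUB
  have hIne : I.Nonempty := by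
    rw [Finset.nonempty_iff_ne_empty]
    rintro rfl
    have := Submodule.finrank_le ((∅ : Finset (Fin n)).inf T)
    simp only [Finset.card_empty] at hI
    omega
  have hW0 : W ≠ ⊥ := by
    intro h
    rw [h, finrank_bot] at hWdim
    exact hIne.card_pos.ne hWdim
  have hWf : FiniteDimensional K W :=
    FiniteDimensional.of_finrank_pos (hWdim ▸ hIne.card_pos)
  have hU1 : finrank K (U ⊔ K ∙ (1 : L) : Submodule K L) = finrank K U + 1 := by
    have h2 := Submodule.finrank_sup_add_finrank_inf_eq U (K ∙ (1 : L))
    have h3 : U ⊓ K ∙ (1 : L) = ⊥ :=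
      ((Submodule.disjoint_span_singleton' one_ne_zero).2 fun h => h1 (hUB h)).eq_bot
    rw [h3, finrank_bot, finrank_span_singleton one_ne_zero] at h2
    omega
  have hWU : W * (U ⊔ K ∙ (1 : L)) ≤ A := by
    rw [Submodule.mul_le]
    intro w hw y hy
    induction hw using Submodule.span_induction with
    | mem w hw =>
      obtain ⟨i, hi, rfl⟩ := hw
      obtain ⟨u, ⟨u', hu', rfl⟩, z, hz, rfl⟩ := Submodule.mem_sup.1 hy
      obtain ⟨c, rfl⟩ := Submodule.mem_span_singleton.1 hz
      rw [mul_add]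
      refine A.add_mem ?_ (by simpa using A.smul_mem c (haA i))
      exact (Finset.inf_le (f := T) hi) hu'
    | zero => simp
    | add w w' _ _ h h' => rw [add_mul]; exact A.add_mem h h'
    | smul c w _ h => rw [smul_mul_assoc]; exact A.smul_mem c h
  obtain ⟨H, S, hHf, hS, hS0, hstab, hdim⟩ := exists_stable_subspace _ W (U ⊔ K ∙ (1 : L))
    hWf inferInstance hW0 (Submodule.mem_sup_right (Submodule.mem_span_singleton_self 1)) rfl
  have hSA := hS.trans hWU
  have hSf : FiniteDimensional K S := Submodule.finiteDimensional_of_le hSA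
  have hSn : finrank K S ≤ n := hA ▸ Submodule.finrank_mono hSA
  have hSpos : 0 < finrank K S := by
    rw [Nat.pos_iff_ne_zero, Ne, Submodule.finrank_eq_zero]
    exact hS0
  have hdvd := finrank_dvd_of_stable H S hstab
  refine ⟨H, ?_, hHf, (Nat.le_of_dvd hSpos hdvd).trans hSn, ?_⟩
  · rintro rfl
    rw [IntermediateField.finrank_bot] at hdim
    omega
  · intro hd
    -- `n + 1 - dim S` would be a positive multiple of `[H:K]` smaller than `[H:K]`
    have h2 := Nat.le_of_dvd (by omega) (Nat.dvd_sub hd hdvd)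
    omega

/-! ### From a field to an unmatchable pair -/

/-- If `[F:K] = h ≤ n` and `h` does not divide `n + 1`, there is an unmatchable pair of
`n`-dimensional subspaces whose second member avoids `1`. -/
theorem exists_not_matchedTo_of_field {K L : Type*} [Field K] [Field L] [Algebra K L] {n : ℕ}
    (hnL : (n : Cardinal) < Module.rank K L)
    (F : IntermediateField K L) (hF : FiniteDimensional K F)
    (hFn : finrank K F ≤ n) (hdvd : ¬ (finrank K F ∣ (n + 1))) :
    ∃ A B : Submodule K L, finrank K A = n ∧ finrank K B = n ∧
      (1 : L) ∉ B ∧ ¬ MatchedTo A B n := by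
  have hpos : 0 < finrank K F := finrank_pos
  set h := finrank K F with hh
  set q := n / h with hq
  have hqr : h * q + n % h = n := Nat.div_add_mod n h
  have hr : n % h + 1 < h := by
    have h1 := Nat.mod_lt n hpos
    refine lt_of_le_of_ne h1 fun h2 => hdvd ⟨q + 1, ?_⟩
    rw [mul_add, mul_one]
    omega
  -- an `F`-subspace `M` of `F`-dimension `q`
  obtain ⟨M, hM, hMf⟩ : ∃ M : Submodule F L, finrank K (M.restrictScalars K) = h * q ∧
      FiniteDimensional K (M.restrictScalars K) := by
    have hqF : (q : Cardinal) ≤ Module.rank F L := by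
      by_contra hcon
      push Not at hcon
      have hFL : FiniteDimensional F L := Module.rank_lt_aleph0_iff.1
        (hcon.trans Cardinal.natCast_lt_aleph0)
      have hKLf : FiniteDimensional K L := FiniteDimensional.trans K F L
      rw [← finrank_eq_rank, Nat.cast_lt] at hcon hnL
      rw [← finrank_mul_finrank K F L, ← hh] at hnL
      have := Nat.mul_le_mul_left h hcon.le
      omega
    obtain ⟨s, hs, hli⟩ := le_rank_iff_exists_linearIndependent_finset.1 hqF
    have hdim : finrank F (Submodule.span F (s : Set L)) = q := by
      rw [finrank_span_finset_eq_card hli, hs]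
    have hfF : FiniteDimensional F (Submodule.span F (s : Set L)) :=
      FiniteDimensional.span_finset F s
    refine ⟨Submodule.span F (s : Set L), ?_, ?_⟩
    · rw [← hdim]
      have : Module.Free F (Submodule.span F (s : Set L)) := Module.Free.of_divisionRing _ _
      exact (finrank_mul_finrank K F (Submodule.span F (s : Set L))).symm
    · exact FiniteDimensional.trans K F (Submodule.span F (s : Set L))
  set M' := M.restrictScalars K with hM'
  -- `A` contains `M` and has dimension `n`
  obtain ⟨A, hMA, hAf, hA⟩ : ∃ A : Submodule K L, M' ≤ A ∧ FiniteDimensional K A ∧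
      finrank K A = n := by
    obtain ⟨x, hx⟩ : ∃ x, x ∉ M' := by
      by_contra hcon
      push Not at hcon
      have htop : M' = ⊤ := eq_top_iff.2 fun y _ => hcon y
      have h1 : Module.rank K L = (finrank K M' : Cardinal) := by
        rw [finrank_eq_rank, htop, rank_top]
      rw [h1, Nat.cast_lt] at hnL
      omega
    obtain ⟨A, h1, h2, -, h3⟩ := exists_le_notMem_finrank hnL x (n % h) M' hMf hx (by omega)
    exact ⟨A, h1, h2, h3⟩
  -- `U` is a hyperplane of `F` avoiding `1`
  obtain ⟨U₀, -, hU₀f, hU₀1, hU₀⟩ := exists_le_notMem_finrank (K := K) (V := F) (n := h - 1)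
    (by rw [← finrank_eq_rank, Nat.cast_lt]; omega) 1 (h - 1) ⊥ inferInstance (by simp) (by simp)
  let U : Submodule K L := U₀.map F.val.toLinearMap
  have hU : finrank K U = h - 1 := by
    rw [← hU₀]
    exact (Submodule.equivMapOfInjective F.val.toLinearMap F.val.injective U₀).finrank_eq.symm
  have hUF : ∀ u ∈ U, u ∈ F := by
    rintro _ ⟨u, -, rfl⟩
    exact u.2
  have hU1 : (1 : L) ∉ U := by
    rintro ⟨u, hu, hu1⟩
    have : u = 1 := Subtype.ext hu1
    exact hU₀1 (this ▸ hu)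
  obtain ⟨B, hUB, hBf, hB1, hB⟩ := exists_le_notMem_finrank hnL 1 (n - (h - 1)) U
    inferInstance hU1 (by omega)
  refine ⟨A, B, hA, hB, hB1, fun hmatch => ?_⟩
  -- a basis of `A` whose members indexed by `i < h * q` lie in `M`
  obtain ⟨ba, hba⟩ := exists_basis_extending (M'.comap A.subtype) (m := h * q) (r := n % h)
    (hM ▸ (Submodule.comapSubtypeEquivOfLe hMA).finrank_eq) (by omega) hqr
  let a : Fin n → L := fun i => (ba i : L)
  have haM : ∀ i : Fin n, (i : ℕ) < h * q → a i ∈ M := fun i hi => hba i hi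
  have ha : IsBasisOf A a := by
    refine ⟨ba.linearIndependent.map' A.subtype A.ker_subtype, ?_⟩
    have : Set.range a = A.subtype '' Set.range ba := by
      rw [← Set.range_comp]; rfl
    rw [this, Submodule.span_image, ba.span_eq, Submodule.map_subtype_top]
  obtain ⟨b, ⟨hbli, hbspan⟩, hb⟩ := hmatch a ha
  -- the `r` members of `b` that are not matched to a vector of `M`
  let c : Fin (n % h) → L := fun k => b ⟨h * q + k, by omega⟩
  have hUc : U ≤ Submodule.span K (Set.range c) := by
    intro u hu
    have huB : u ∈ Submodule.span K (Set.range b) := hbspan ▸ hUB hu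
    obtain ⟨l, hl⟩ := (Finsupp.mem_span_range_iff_exists_finsupp).1 huB
    have hl' : Finsupp.linearCombination K b l = u := hl
    have hzero : ∀ i : Fin n, (i : ℕ) < h * q → l i = 0 := by
      intro i hi
      have hai : a i ≠ 0 := ha.1.ne_zero i
      have huA : u ∈ (a i)⁻¹ • (A : Set L) := by
        refine ⟨a i * u, hMA ?_, inv_mul_cancel_left₀ hai u⟩
        rw [mul_comm]
        exact M.smul_mem (⟨u, hUF u hu⟩ : F) (haM i hi)
      obtain ⟨l', hl's, hl'u⟩ :=
        (Finsupp.mem_span_image_iff_linearCombination K).1 (hb i ⟨huA, hUB hu⟩)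
      have : l = l' := hbli (hl'.trans hl'u.symm)
      subst this
      by_contra hne
      exact (Finsupp.mem_supported K l).1 hl's (Finsupp.mem_support_iff.2 hne) rfl
    rw [← hl]
    refine Submodule.sum_mem _ fun i hi => Submodule.smul_mem _ _ (Submodule.subset_span ?_)
    have hi' : h * q ≤ i := by
      by_contra hlt
      exact Finsupp.mem_support_iff.1 hi (hzero i (by omega))
    refine ⟨⟨i - h * q, by omega⟩, ?_⟩
    show b _ = b i
    congr 1
    ext
    simp only
    omega
  have hcf : FiniteDimensional K (Submodule.span K (Set.range c)) :=
    FiniteDimensional.span_of_finite K (Set.finite_range c)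
  have h1 : finrank K U ≤ finrank K (Submodule.span K (Set.range c)) := Submodule.finrank_mono hUc
  have h2 : finrank K (Submodule.span K (Set.range c)) ≤ n % h := by
    simpa [Set.finrank] using finrank_range_le_card (R := K) c
  omega

theorem stmt_18 {K L : Type*} [Field K] [Field L] [Algebra K L]
    (hKL : ¬ Function.Surjective (algebraMap K L))
    (n₀ n : ℕ) (hn : 0 < n)
    (h₀ : ∃ F : IntermediateField K L, F ≠ ⊥ ∧ F ≠ ⊤ ∧ FiniteDimensional K F ∧
      Module.finrank K F = n₀)
    (hmin : ∀ F : IntermediateField K L, F ≠ ⊥ → FiniteDimensional K F →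
      n₀ ≤ Module.finrank K F)
    (hn₀ : n₀ ≤ n) (hnL : (n : Cardinal) < Module.rank K L) :
    (∃ A B : Submodule K L, Module.finrank K A = n ∧ Module.finrank K B = n ∧
      (1 : L) ∉ B ∧ ¬ MatchedTo A B n) ↔
    (∃ F : IntermediateField K L, F ≠ ⊥ ∧ FiniteDimensional K F ∧
      Module.finrank K F ≤ n ∧ ¬ (Module.finrank K F ∣ (n + 1))) := by
  constructor
  · rintro ⟨A, B, hA, hB, h1, hAB⟩
    exact exists_field_of_not_matchedTo hn A B hA hB h1 hAB
  · rintro ⟨F, -, hF, hFn, hdvd⟩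
    exact exists_not_matchedTo_of_field hnL F hF hFn hdvd
end
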